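/- There exist constants c > 0, C > 0 and an integer r₀ such that for all integers r ≥ r₀ one has c · r^{3/5} ≤ f(r, θ_{3,4}) ≤ C · r^{3/5}. -/

import Mathlib

open SimpleGraph

/-- `G` is an `(r,k)`-graph: its vertex set can be partitioned into `r` parts,
each of size at most `k`, with at least one edge between any two distinct parts. -/
def IsRKGraph {V : Type} [Fintype V] (G : SimpleGraph V) (r k : ℕ) : Prop :=
  ∃ P : Fin r → Finset V,
    (∀ v : V, ∃! i, v ∈ P i) ∧
    (∀ i, (P i).card ≤ k) ∧
    ∀ i j : Fin r, i ≠ j → ∃ u ∈ P i, ∃ w ∈ P j, G.Adj u w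

/-- `G` contains a subgraph isomorphic to `H`. -/
def ContainsSub {W V : Type} (H : SimpleGraph W) (G : SimpleGraph V) : Prop :=
  ∃ f : H →g G, Function.Injective f

/-- `f(r,H)`: the minimum `k` for which there exists an `H`-free `(r,k)`-graph. -/
noncomputable def fGraph {W : Type} (H : SimpleGraph W) (r : ℕ) : ℕ :=
  sInf {k | ∃ (n : ℕ) (G : SimpleGraph (Fin n)), ¬ ContainsSub H G ∧ IsRKGraph G r k}

/-- The theta graph `θ_{3,4}`: three internally disjoint paths of length 4 sharing
their two endpoints.  The endpoints are `Sum.inl 0` and `Sum.inl 1`; path `i` has internal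
vertices `(i,0), (i,1), (i,2)`. -/
def theta34 : SimpleGraph ((Fin 2) ⊕ (Fin 3 × Fin 3)) :=
  SimpleGraph.fromRel (fun a b =>
    (∃ i : Fin 3, a = Sum.inl 0 ∧ b = Sum.inr (i, 0)) ∨
    (∃ i : Fin 3, a = Sum.inl 1 ∧ b = Sum.inr (i, 2)) ∨
    (∃ (i : Fin 3) (j : Fin 3) (hj : (j : ℕ) + 1 < 3),
      a = Sum.inr (i, j) ∧ b = Sum.inr (i, ⟨(j : ℕ) + 1, hj⟩)))

/-!
Lower bound. In a bipartite `θ_{3,4}`-free graph, any two consecutive layers of a breadth-first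
search span only linearly many edges, since a denser pair would produce three paths of length four
with common ends. If the minimum degree is `δ`, the layers therefore grow by a factor of order `δ`
for four steps, so `δ ^ 4 = O(n)`. Passing to a bipartite subgraph and deleting vertices of small
degree turns this into the Faudree–Simonovits bound `e(G) = O(n ^ (5/4))`. An `(r,k)`-graph has
at most `rk` vertices and at least `r.choose 2` edges, whence `r ^ 3 = O(k ^ 5)`.

Upper bound. Let `F` be a field with `p²` elements, `p` odd, and join `(x, s)` to `(y, t)`, where
`s, t ∈ F³`, when `s + t = (xy, x²y, xy²)`. The ends of a path of length four determine a system of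
three equations for the labels of its internal vertices, and these labels can take at most two
values, so there is no `θ_{3,4}`. Identify the additive group `F³` with `A × A`, `#A = p³`. Taking
as parts the vertices with a given label and a given first half of `s`, respectively second half of
`t`, gives `p⁵` parts of size `2p³`; any two are joined because `s + t` can be prescribed by the
free halves. Bertrand's postulate interpolates between primes.
-/

section Theta

variable {V V' W : Type} {G : SimpleGraph V} {G' : SimpleGraph V'} {H : SimpleGraph W}

theorem ContainsSub.map (h : ContainsSub H G) (φ : G →g G') (hφ : Function.Injective φ) :
    ContainsSub H G' :=
  let ⟨f, hf⟩ := h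
  ⟨φ.comp f, hφ.comp hf⟩

/-- The vertices `u`, `w` and the three paths `u, x i, y i, z i, w` form a copy of `θ_{3,4}`
in `G`. -/
structure IsTheta (G : SimpleGraph V) (u w : V) (x y z : Fin 3 → V) : Prop where
  adj_ux : ∀ i, G.Adj u (x i)
  adj_xy : ∀ i, G.Adj (x i) (y i)
  adj_yz : ∀ i, G.Adj (y i) (z i)
  adj_zw : ∀ i, G.Adj (z i) w
  inj_x : Function.Injective x
  inj_y : Function.Injective y
  inj_z : Function.Injective z
  ne_xy : ∀ i j, x i ≠ y j
  ne_xz : ∀ i j, x i ≠ z j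
  ne_yz : ∀ i j, y i ≠ z j
  ne_uw : u ≠ w
  ne_uy : ∀ i, u ≠ y i
  ne_uz : ∀ i, u ≠ z i
  ne_wx : ∀ i, w ≠ x i
  ne_wy : ∀ i, w ≠ y i

theorem IsTheta.map {u w : V} {x y z : Fin 3 → V} (h : IsTheta G u w x y z) (φ : G →g G')
    (hφ : Function.Injective φ) : IsTheta G' (φ u) (φ w) (φ ∘ x) (φ ∘ y) (φ ∘ z) where
  adj_ux i := φ.map_adj (h.adj_ux i)
  adj_xy i := φ.map_adj (h.adj_xy i)
  adj_yz i := φ.map_adj (h.adj_yz i)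
  adj_zw i := φ.map_adj (h.adj_zw i)
  inj_x := hφ.comp h.inj_x
  inj_y := hφ.comp h.inj_y
  inj_z := hφ.comp h.inj_z
  ne_xy i j := hφ.ne (h.ne_xy i j)
  ne_xz i j := hφ.ne (h.ne_xz i j)
  ne_yz i j := hφ.ne (h.ne_yz i j)
  ne_uw := hφ.ne h.ne_uw
  ne_uy i := hφ.ne (h.ne_uy i)
  ne_uz i := hφ.ne (h.ne_uz i)
  ne_wx i := hφ.ne (h.ne_wx i)
  ne_wy i := hφ.ne (h.ne_wy i)

theorem theta34_adj_iff {a b : Fin 2 ⊕ Fin 3 × Fin 3} :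
    theta34.Adj a b ↔ ∃ i,
      (s(a, b) = s(.inl 0, .inr (i, 0)) ∨ s(a, b) = s(.inr (i, 0), .inr (i, 1))) ∨
      s(a, b) = s(.inr (i, 1), .inr (i, 2)) ∨ s(a, b) = s(.inr (i, 2), .inl 1) := by
  constructor
  · rintro ⟨-, (⟨i, rfl, rfl⟩ | ⟨i, rfl, rfl⟩ | ⟨i, j, hj, rfl, rfl⟩) |
        ⟨i, rfl, rfl⟩ | ⟨i, rfl, rfl⟩ | ⟨i, j, hj, rfl, rfl⟩⟩ <;>
      refine ⟨i, ?_⟩ <;> first | simp; done | (fin_cases j <;> simp at hj ⊢)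
  · rintro ⟨i, (h | h) | h | h⟩ <;> obtain ⟨rfl, rfl⟩ | ⟨rfl, rfl⟩ := Sym2.eq_iff.1 h <;>
      simp [theta34]

theorem containsSub_theta34_iff :
    ContainsSub theta34 G ↔ ∃ u w x y z, IsTheta G u w x y z := by
  constructor
  · rintro ⟨f, hf⟩
    refine ⟨f (.inl 0), f (.inl 1), fun i => f (.inr (i, 0)), fun i => f (.inr (i, 1)),
      fun i => f (.inr (i, 2)), ?_⟩
    constructor
    iterate 4 exact fun i => f.map_adj (theta34_adj_iff.2 ⟨i, by simp⟩)
    iterate 3 exact fun i j h => by simpa using hf h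
    all_goals simp [hf.eq_iff]
  · rintro ⟨u, w, x, y, z, h⟩
    refine ⟨⟨Sum.elim ![u, w] fun i => ![x i.1, y i.1, z i.1] i.2, fun {a b} hab => ?_⟩, ?_⟩
    · obtain ⟨i, (hi | hi) | hi | hi⟩ := theta34_adj_iff.1 hab <;>
        obtain ⟨rfl, rfl⟩ | ⟨rfl, rfl⟩ := Sym2.eq_iff.1 hi <;>
        simp [h.adj_ux, h.adj_xy, h.adj_yz, h.adj_zw, (h.adj_ux _).symm, (h.adj_xy _).symm,
          (h.adj_yz _).symm, (h.adj_zw _).symm]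
    · have hux i := (h.adj_ux i).ne
      have hzw i := (h.adj_zw i).ne
      rintro (a | ⟨i, a⟩) (b | ⟨j, b⟩) hab <;> fin_cases a <;> fin_cases b <;>
        simp_all [h.inj_x.eq_iff, h.inj_y.eq_iff, h.inj_z.eq_iff, h.ne_xy, h.ne_xz,
          h.ne_yz, h.ne_uw, h.ne_uy, h.ne_uz, h.ne_wx, h.ne_wy, eq_comm]

end Theta

section Counting

open Finset

variable {V ι : Type*} {G : SimpleGraph V} [DecidableRel G.Adj]

theorem card_interedges_eq_sum (X Y : Finset V) :
    #(G.interedges X Y) = ∑ y ∈ Y, #{x ∈ X | G.Adj x y} := by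
  simp only [interedges_def, card_filter, sum_product_right]

theorem card_interedges_comm (X Y : Finset V) : #(G.interedges X Y) = #(G.interedges Y X) :=
  have := G.symm
  Rel.card_interedges_comm X Y

theorem card_interedges_le_add_filter_right (d : ℕ) (X Y : Finset V) :
    #(G.interedges X Y) ≤ d * #Y + #(G.interedges X {y ∈ Y | d < #{x ∈ X | G.Adj x y}}) := by
  simp only [card_interedges_eq_sum X]
  rw [← sum_filter_not_add_sum_filter Y fun y => d < #{x ∈ X | G.Adj x y}]
  gcongr
  calc ∑ y ∈ Y with ¬d < #{x ∈ X | G.Adj x y}, #{x ∈ X | G.Adj x y}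
      ≤ #{y ∈ Y | ¬d < #{x ∈ X | G.Adj x y}} * d :=
        sum_le_card_nsmul _ _ _ fun y hy => not_lt.1 (mem_filter.1 hy).2
    _ ≤ d * #Y := by
        rw [mul_comm]
        gcongr
        exact filter_subset _ _

theorem card_interedges_le_add_filter_left (d : ℕ) (X Y : Finset V) :
    #(G.interedges X Y) ≤ d * #X + #(G.interedges {x ∈ X | d < #{y ∈ Y | G.Adj y x}} Y) := by
  rw [card_interedges_comm X, card_interedges_comm _ Y]
  exact card_interedges_le_add_filter_right d Y X

theorem card_interedges_le_mul_of_forall_le {d : ℕ} {X Y : Finset V}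
    (h : ∀ y ∈ Y, #{x ∈ X | G.Adj x y} ≤ d) : #(G.interedges X Y) ≤ d * #Y := by
  rw [card_interedges_eq_sum, mul_comm]
  exact sum_le_card_nsmul _ _ _ h

variable [DecidableEq ι]

theorem card_interedges_le_of_forall_fiber (f : V → ι) {K m : ℕ} {X Y : Finset V}
    (hfiber : ∀ b ∈ X.image f, ∀ Y' ⊆ Y,
      #(G.interedges {x ∈ X | f x = b} Y') ≤ K * (#{x ∈ X | f x = b} + #Y'))
    (hm : ∀ y ∈ Y, #({x ∈ X | G.Adj x y}.image f) ≤ m) :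
    #(G.interedges X Y) ≤ K * (#X + m * #Y) := by
  let Yb b := {y ∈ Y | b ∈ {x ∈ X | G.Adj x y}.image f}
  have hYb : ∑ b ∈ X.image f, #(Yb b) ≤ m * #Y := by
    calc ∑ b ∈ X.image f, #(Yb b)
        = ∑ y ∈ Y, #{b ∈ X.image f | b ∈ {x ∈ X | G.Adj x y}.image f} :=
          sum_card_bipartiteAbove_eq_sum_card_bipartiteBelow _
      _ ≤ #Y * m := sum_le_card_nsmul _ _ _ fun y hy =>
          (card_le_card fun b hb => (mem_filter.1 hb).2).trans (hm y hy)
      _ = m * #Y := mul_comm _ _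
  calc #(G.interedges X Y)
      = ∑ b ∈ X.image f, #(G.interedges {x ∈ X | f x = b} (Yb b)) := by
        rw [card_eq_sum_card_fiberwise (f := f ∘ Prod.fst) (t := X.image f) fun e he =>
          mem_image_of_mem f (G.mem_interedges_iff.1 he).1]
        refine sum_congr rfl fun b _ => congrArg card ?_
        ext ⟨x, y⟩
        simp [mem_interedges_iff, Yb]
        grind
    _ ≤ ∑ b ∈ X.image f, K * (#{x ∈ X | f x = b} + #(Yb b)) :=
        sum_le_sum fun b hb => hfiber b hb _ (filter_subset _ _)
    _ ≤ K * (#X + m * #Y) := by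
        rw [← mul_sum, sum_add_distrib, ← card_eq_sum_card_image]
        gcongr

theorem exists_injective_comp_adj {n : ℕ} (f : V → ι) {X : Finset V} {A : Finset ι}
    {v : Fin n → V} (h : ∀ i, n + #A ≤ #({x ∈ X | G.Adj x (v i)}.image f)) :
    ∃ x : Fin n → V, Function.Injective (f ∘ x) ∧
      ∀ i, x i ∈ X ∧ G.Adj (x i) (v i) ∧ f (x i) ∉ A := by
  obtain ⟨b, hb, hbmem⟩ := (all_card_le_biUnion_card_iff_exists_injective
    fun i => {x ∈ X | G.Adj x (v i)}.image f \ A).1 fun s => by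
      obtain rfl | ⟨i, hi⟩ := s.eq_empty_or_nonempty
      · simp
      · calc #s ≤ n := card_finset_fin_le s
          _ ≤ #({x ∈ X | G.Adj x (v i)}.image f) - #A := Nat.le_sub_of_add_le (h i)
          _ ≤ #({x ∈ X | G.Adj x (v i)}.image f \ A) := le_card_sdiff _ _
          _ ≤ _ := card_le_card (subset_biUnion_of_mem
            (fun i => {x ∈ X | G.Adj x (v i)}.image f \ A) hi)
  have hx i : ∃ x, (x ∈ X ∧ G.Adj x (v i) ∧ f x ∉ A) ∧ f x = b i := by
    have := hbmem i
    grind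
  choose x hx hfx using hx
  exact ⟨x, by rwa [show f ∘ x = b from funext hfx], hx⟩

theorem exists_injective_adj {n : ℕ} {X A : Finset V} {v : Fin n → V}
    (h : ∀ i, n + #A ≤ #{x ∈ X | G.Adj x (v i)}) :
    ∃ x : Fin n → V, Function.Injective x ∧ ∀ i, x i ∈ X ∧ G.Adj (x i) (v i) ∧ x i ∉ A := by
  classical
  exact exists_injective_comp_adj id (by simpa using h)

end Counting

section Layers

open Finset

variable {V : Type} {G : SimpleGraph V} [DecidableRel G.Adj]

theorem card_interedges_le_of_adj (hG : ¬ContainsSub theta34 G) {a : V} {X Y : Finset V}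
    (haX : ∀ x ∈ X, G.Adj a x) (haY : a ∉ Y) (hXY : Disjoint X Y) :
    #(G.interedges X Y) ≤ 7 * (#X + #Y) := by
  classical
  set Y₁ := {y ∈ Y | 5 < #{x ∈ X | G.Adj x y}}
  set X₁ := {x ∈ X | 3 < #{y ∈ Y₁ | G.Adj y x}}
  have hY₁ : ∀ y ∈ Y₁, y ∈ Y ∧ 5 < #{x ∈ X | G.Adj x y} := fun y => mem_filter.1
  have hX₁ : ∀ x ∈ X₁, x ∈ X ∧ 3 < #{y ∈ Y₁ | G.Adj y x} := fun x => mem_filter.1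
  have hsmall : ∀ w ∈ Y₁, #{z ∈ X₁ | G.Adj z w} ≤ 2 := by
    intro w hw
    by_contra! hdeg
    obtain ⟨z, hz, hzw⟩ :=
      exists_injective_adj (G := G) (n := 3) (A := ∅) (v := fun _ => w) fun _ => by simpa
    obtain ⟨y, hy, hyz⟩ :=
      exists_injective_adj (G := G) (A := {w}) (v := z) fun i => (hX₁ _ (hzw i).1).2
    obtain ⟨x, hx, hxy⟩ :=
      exists_injective_adj (G := G) (A := univ.image z) (v := y) fun i => by
        simpa [card_image_of_injective _ hz, Nat.succ_le_iff] using (hY₁ _ (hyz i).1).2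
    refine hG (containsSub_theta34_iff.2 ⟨a, w, x, y, z, ?_⟩)
    have hne : ∀ p ∈ X, ∀ q ∈ Y, p ≠ q := fun p hp q hq => hXY.forall_ne_finset hp hq
    have hzX i : z i ∈ X := (hX₁ _ (hzw i).1).1
    have hyY i : y i ∈ Y := (hY₁ _ (hyz i).1).1
    have hwY := (hY₁ w hw).1
    constructor <;> grind [SimpleGraph.Adj.ne]
  calc #(G.interedges X Y)
      ≤ 5 * #Y + (3 * #X + #(G.interedges X₁ Y₁)) :=
        (card_interedges_le_add_filter_right 5 X Y).trans
          (Nat.add_le_add_left (card_interedges_le_add_filter_left 3 X Y₁) _)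
    _ ≤ 5 * #Y + (3 * #X + 2 * #Y) := by
        gcongr
        exact (card_interedges_le_mul_of_forall_le hsmall).trans
          (Nat.mul_le_mul_left 2 (card_filter_le _ _))
    _ ≤ 7 * (#X + #Y) := by omega

/-- The map `parent` sends every vertex of positive level to a neighbour one level below; its
iterates run along the tree paths of a breadth-first search. -/
structure IsParentMap (G : SimpleGraph V) (level : V → ℕ) (parent : V → V) : Prop where
  adj : ∀ w, level w ≠ 0 → G.Adj (parent w) w
  level_add_one : ∀ w, level w ≠ 0 → level (parent w) + 1 = level w

variable {level : V → ℕ} {parent : V → V}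

-- Edges at a vertex of `Y` that meets at most three branches below `a` are counted branch by
-- branch. If some `w ∈ X` had three neighbours meeting more branches, these could be continued to
-- `a` through three distinct branches other than that of `w`.
theorem IsParentMap.card_interedges_le_of_parent_parent (h : IsParentMap G level parent)
    (hG : ¬ContainsSub theta34 G) {a : V} {X Y : Finset V}
    (hX : ∀ x ∈ X, parent (parent x) = a ∧ level x = level a + 2)
    (hY : ∀ y ∈ Y, level y = level a + 3) :
    #(G.interedges X Y) ≤ 21 * (#X + #Y) := by
  classical
  set Y₁ := {y ∈ Y | ¬3 < #({x ∈ X | G.Adj x y}.image parent)}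
  set Y₂ := {y ∈ Y | 3 < #({x ∈ X | G.Adj x y}.image parent)}
  have hfew : #(G.interedges X Y₁) ≤ 7 * (#X + 3 * #Y₁) := by
    refine card_interedges_le_of_forall_fiber parent (fun b hb Y' hY' => ?_) (by grind)
    obtain ⟨x₀, hx₀, rfl⟩ := mem_image.1 hb
    have hlevel := h.level_add_one x₀
    apply card_interedges_le_of_adj hG (a := parent x₀)
    · grind [h.adj]
    · grind
    · rw [Finset.disjoint_left]
      grind
  have hmany : #(G.interedges X Y₂) ≤ 2 * #X := by
    rw [card_interedges_comm]
    refine card_interedges_le_mul_of_forall_le fun w hw => ?_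
    by_contra! hdeg
    obtain ⟨y, hy, hyw⟩ :=
      exists_injective_adj (G := G) (n := 3) (A := ∅) (v := fun _ => w) fun _ => by simpa
    obtain ⟨x, hx, hxy⟩ :=
      exists_injective_comp_adj (G := G) parent (A := {parent w}) (v := y) fun i =>
        (mem_filter.1 (hyw i).1).2
    refine hG (containsSub_theta34_iff.2 ⟨a, w, parent ∘ x, x, y, ?_⟩)
    have hxX i := hX _ (hxy i).1
    have hwX := hX w hw
    have hyY i : level (y i) = level a + 3 := hY _ (mem_filter.1 (hyw i).1).1
    have hpx i := h.level_add_one (x i)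
    have hpxx i := h.adj (x i)
    have hppx i := h.adj (parent (x i))
    constructor <;> grind [Function.Injective.of_comp]
  calc #(G.interedges X Y) = #(G.interedges X Y₁) + #(G.interedges X Y₂) := by
        simp only [card_interedges_eq_sum X]
        exact (sum_filter_not_add_sum_filter Y _ _).symm
    _ ≤ 7 * (#X + 3 * #Y₁) + 2 * #X := add_le_add hfew hmany
    _ ≤ 7 * (#X + 3 * #Y) + 2 * #X := by
        gcongr
        exact filter_subset _ _
    _ ≤ 21 * (#X + #Y) := by omega

-- No `y ∈ Y` meets three branches below `a`, as the tree paths through them would form a theta.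
theorem IsParentMap.card_interedges_le_of_parent_parent_parent (h : IsParentMap G level parent)
    (hG : ¬ContainsSub theta34 G) {a : V} {X Y : Finset V}
    (hX : ∀ x ∈ X, parent (parent (parent x)) = a ∧ level x = level a + 3)
    (hY : ∀ y ∈ Y, level y = level a + 4) :
    #(G.interedges X Y) ≤ 42 * (#X + #Y) := by
  classical
  suffices #(G.interedges X Y) ≤ 21 * (#X + 2 * #Y) by omega
  refine card_interedges_le_of_forall_fiber (parent ∘ parent) (fun b hb Y' hY' => ?_) fun y hy => ?_
  · obtain ⟨x₀, hx₀, rfl⟩ := mem_image.1 hb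
    have hlevel := h.level_add_one x₀
    have hlevel' := h.level_add_one (parent x₀)
    apply h.card_interedges_le_of_parent_parent hG (a := parent (parent x₀)) <;> grind
  by_contra! hdeg
  obtain ⟨x, (hx : Function.Injective (parent ∘ parent ∘ x)), hxy⟩ :=
    exists_injective_comp_adj (G := G) (n := 3) (parent ∘ parent) (A := ∅) (v := fun _ => y)
      fun _ => by simpa
  refine hG (containsSub_theta34_iff.2 ⟨a, y, parent ∘ parent ∘ x, parent ∘ x, x, ?_⟩)
  have hxX i := hX _ (hxy i).1
  have hpx i := h.level_add_one (x i)
  have hppx i := h.level_add_one (parent (x i))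
  have hadj i := h.adj (x i)
  have hadj' i := h.adj (parent (x i))
  have hadj'' i := h.adj (parent (parent (x i)))
  have hinj : Function.Injective (parent ∘ x) := hx.of_comp (f := parent)
  have hinj' : Function.Injective x := hinj.of_comp
  constructor <;> grind

end Layers

section BreadthFirstSearch

open Finset

variable {V : Type} {G : SimpleGraph V}

theorem exists_isParentMap (G : SimpleGraph V) (v : V) :
    ∃ parent, IsParentMap G (G.dist v) parent := by
  have hparent w : ∃ u, G.dist v w ≠ 0 → G.Adj u w ∧ G.dist v u + 1 = G.dist v w := by
    by_cases hw : G.dist v w = 0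
    · exact ⟨w, by simp [hw]⟩
    obtain ⟨p, hp⟩ := (Reachable.of_dist_ne_zero hw).exists_walk_length_eq_dist
    have hpn : ¬p.Nil := by
      rw [Walk.not_nil_iff_lt_length]
      omega
    have hadj := p.adj_penultimate hpn
    have hle := dist_le p.dropLast
    have hlen := p.length_dropLast_add_one hpn
    have := hadj.diff_dist_adj (u := v)
    exact ⟨p.penultimate, fun _ => ⟨hadj, by omega⟩⟩
  choose parent hparent using hparent
  exact ⟨parent, fun w hw => (hparent w hw).1, fun w hw => (hparent w hw).2⟩

theorem dist_eq_add_one_or_of_isBipartite (hb : G.IsBipartite) {v u w : V}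
    (hvu : G.Reachable v u) (huw : G.Adj u w) :
    G.dist v w = G.dist v u + 1 ∨ G.dist v w + 1 = G.dist v u := by
  have hne : G.dist v w ≠ G.dist v u := by
    obtain ⟨c⟩ := hb
    let c' : G.Coloring Bool := recolorOfEquiv G finTwoEquiv c
    obtain ⟨p, hp⟩ := hvu.exists_walk_length_eq_dist
    obtain ⟨q, hq⟩ := (hvu.trans huw.reachable).exists_walk_length_eq_dist
    have hpar := c'.even_length_iff_congr p
    have hqar := c'.even_length_iff_congr q
    have := c'.valid huw
    grind
  have := huw.diff_dist_adj (u := v)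
  omega

variable [Fintype V]

open Classical in
/-- The vertices of the component of `v` at distance exactly `i` from `v`. Reachability is required
because `SimpleGraph.dist` is `0` between different components. -/
noncomputable def distLayer (G : SimpleGraph V) (v : V) (i : ℕ) : Finset V :=
  {w | G.Reachable v w ∧ G.dist v w = i}

theorem mem_distLayer {v w : V} {i : ℕ} :
    w ∈ distLayer G v i ↔ G.Reachable v w ∧ G.dist v w = i := by
  simp [distLayer]

theorem distLayer_zero (v : V) : distLayer G v 0 = {v} := by
  ext w
  simp only [mem_distLayer, mem_singleton]
  exact ⟨fun h => (h.1.dist_eq_zero_iff.1 h.2).symm, by rintro rfl; simp⟩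

theorem IsParentMap.parent_mem_distLayer {v w : V} {i : ℕ} {parent : V → V}
    (h : IsParentMap G (G.dist v) parent) (hw : w ∈ distLayer G v (i + 1)) :
    parent w ∈ distLayer G v i := by
  obtain ⟨hreach, hdist⟩ := mem_distLayer.1 hw
  have hne : G.dist v w ≠ 0 := by omega
  exact mem_distLayer.2
    ⟨hreach.trans (h.adj w hne).symm.reachable, by have := h.level_add_one w hne; omega⟩

variable [DecidableRel G.Adj]

theorem card_interedges_distLayer_le (hG : ¬ContainsSub theta34 G) (v : V) {i : ℕ} (hi : i ≤ 3) :
    #(G.interedges (distLayer G v i) (distLayer G v (i + 1))) ≤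
      42 * (#(distLayer G v i) + #(distLayer G v (i + 1))) := by
  obtain ⟨parent, h⟩ := exists_isParentMap G v
  have hroot {w} (hw : w ∈ distLayer G v 0) : w = v := by simpa [distLayer_zero] using hw
  have hdist {j w} (hw : w ∈ distLayer G v j) : G.dist v w = j := (mem_distLayer.1 hw).2
  interval_cases i
  · refine (G.card_interedges_le_mul _ _).trans ?_
    rw [distLayer_zero, card_singleton]
    omega
  · refine (card_interedges_le_of_adj hG (a := v) ?_ ?_ ?_).trans (by gcongr; norm_num)
    · exact fun x hx => dist_eq_one_iff_adj.1 (hdist hx)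
    · exact fun hv => by simpa using hdist hv
    · exact Finset.disjoint_left.2 fun x hx hx' => by simpa using (hdist hx).symm.trans (hdist hx')
  · refine (h.card_interedges_le_of_parent_parent hG (a := v) ?_ ?_).trans (by gcongr; norm_num)
    · exact fun x hx => ⟨hroot (h.parent_mem_distLayer (h.parent_mem_distLayer hx)),
        by simpa using hdist hx⟩
    · exact fun y hy => by simpa using hdist hy
  · refine h.card_interedges_le_of_parent_parent_parent hG (a := v) ?_ ?_
    · exact fun x hx =>
        ⟨hroot (h.parent_mem_distLayer (h.parent_mem_distLayer (h.parent_mem_distLayer hx))),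
          by simpa using hdist hx⟩
    · exact fun y hy => by simpa using hdist hy

theorem minDegree_mul_card_distLayer_zero_le (v : V) :
    G.minDegree * #(distLayer G v 0) ≤ #(distLayer G v 1) := by
  rw [distLayer_zero, card_singleton, mul_one]
  refine (G.minDegree_le_degree v).trans (card_le_card fun w hw => ?_)
  have hvw := (G.mem_neighborFinset v w).1 hw
  exact mem_distLayer.2 ⟨hvw.reachable, dist_eq_one_iff_adj.2 hvw⟩

theorem minDegree_mul_card_distLayer_add_one_le (hb : G.IsBipartite) (v : V) (i : ℕ) :
    G.minDegree * #(distLayer G v (i + 1)) ≤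
      #(G.interedges (distLayer G v i) (distLayer G v (i + 1))) +
        #(G.interedges (distLayer G v (i + 1)) (distLayer G v (i + 1 + 1))) := by
  classical
  rw [card_interedges_comm (distLayer G v (i + 1)), card_interedges_eq_sum, card_interedges_eq_sum,
    ← sum_add_distrib, mul_comm]
  refine card_nsmul_le_sum _ _ _ fun w hw => ?_
  obtain ⟨hreach, hdist⟩ := mem_distLayer.1 hw
  refine (G.minDegree_le_degree w).trans ((card_le_card fun u hu => ?_).trans (card_union_le _ _))
  have hwu := (G.mem_neighborFinset w u).1 hu
  have hu := hreach.trans hwu.reachable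
  have := dist_eq_add_one_or_of_isBipartite hb hreach hwu
  simp only [mem_union, mem_filter, mem_distLayer, hu, hwu.symm, true_and, and_true]
  omega

theorem minDegree_mul_card_distLayer_le (hG : ¬ContainsSub theta34 G) (hb : G.IsBipartite)
    (hδ : 252 ≤ G.minDegree) (v : V) :
    ∀ i ≤ 3, G.minDegree * #(distLayer G v i) ≤ 84 * #(distLayer G v (i + 1)) := by
  intro i hi
  induction i with
  | zero =>
    exact (minDegree_mul_card_distLayer_zero_le v).trans (Nat.le_mul_of_pos_left _ (by simp))
  | succ i ih =>
    have hgrowth : #(distLayer G v i) ≤ #(distLayer G v (i + 1)) := by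
      have := Nat.mul_le_mul_right #(distLayer G v i) hδ
      have := ih (by omega)
      omega
    have hdeg := minDegree_mul_card_distLayer_add_one_le hb v i
    have hbelow := card_interedges_distLayer_le hG v (i := i) (by omega)
    have habove := card_interedges_distLayer_le hG v hi
    have := Nat.mul_le_mul_right #(distLayer G v (i + 1)) hδ
    omega

theorem minDegree_pow_four_le [Nonempty V] (hG : ¬ContainsSub theta34 G) (hb : G.IsBipartite) :
    G.minDegree ^ 4 ≤ 252 ^ 4 * Fintype.card V := by
  obtain hδ | hδ := lt_or_ge G.minDegree 252
  · calc G.minDegree ^ 4 ≤ 252 ^ 4 * 1 := by rw [mul_one]; gcongr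
      _ ≤ 252 ^ 4 * Fintype.card V := by gcongr; exact Fintype.card_pos
  · obtain ⟨v⟩ := ‹Nonempty V›
    have hpow : ∀ i ≤ 4, G.minDegree ^ i ≤ 84 ^ i * #(distLayer G v i) := by
      intro i hi
      induction i with
      | zero => simp [distLayer_zero]
      | succ i ih =>
        calc G.minDegree ^ (i + 1) = G.minDegree ^ i * G.minDegree := pow_succ _ _
          _ ≤ 84 ^ i * #(distLayer G v i) * G.minDegree := by gcongr; exact ih (by omega)
          _ = 84 ^ i * (G.minDegree * #(distLayer G v i)) := by ring
          _ ≤ 84 ^ i * (84 * #(distLayer G v (i + 1))) :=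
            Nat.mul_le_mul_left _ (minDegree_mul_card_distLayer_le hG hb hδ v i (by omega))
          _ = 84 ^ (i + 1) * #(distLayer G v (i + 1)) := by ring
    exact (hpow 4 le_rfl).trans (Nat.mul_le_mul (by norm_num) (card_le_univ _))

end BreadthFirstSearch

section EdgeBound

open Finset

variable {V : Type} {G : SimpleGraph V} [Fintype V] [DecidableRel G.Adj]

theorem two_mul_card_filter_ne [DecidableEq V] {u v : V} (huv : u ≠ v) :
    2 * #{c : V → Bool | c u ≠ c v} = Fintype.card (V → Bool) := by
  have htoggle : #{c : V → Bool | c u ≠ c v} = #{c : V → Bool | ¬c u ≠ c v} :=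
    card_nbij' (fun c => Function.update c u (!c u)) (fun c => Function.update c u (!c u))
      (by intro c; cases hu : c u <;> simp [huv.symm, hu])
      (by intro c; cases hu : c u <;> simp [huv.symm, hu])
      (by intro c; simp) (by intro c; simp)
  rw [two_mul]
  nth_rw 2 [htoggle]
  rw [card_filter_add_card_filter_not, card_univ]

-- An edge is bichromatic in half of all two-colourings; average over them.
theorem exists_le_isBipartite_card_edgeFinset_le :
    ∃ (H : SimpleGraph V) (_ : DecidableRel H.Adj),
      H ≤ G ∧ H.IsBipartite ∧ #G.edgeFinset ≤ 2 * #H.edgeFinset := by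
  classical
  have hsplit : ∀ e ∈ G.edgeFinset,
      2 * #{c : V → Bool | e ∈ (G ⊓ (⊤ : SimpleGraph Bool).comap c).edgeFinset} =
        Fintype.card (V → Bool) := by
    intro e he
    induction e with | _ u v
    have huv : G.Adj u v := mem_edgeFinset.1 he
    simpa [huv] using two_mul_card_filter_ne huv.ne
  have hcount : ∑ _c : V → Bool, #G.edgeFinset ≤
      ∑ c : V → Bool, 2 * #(G ⊓ (⊤ : SimpleGraph Bool).comap c).edgeFinset :=
    calc ∑ _c : V → Bool, #G.edgeFinset
        = ∑ e ∈ G.edgeFinset,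
            2 * #{c : V → Bool | e ∈ (G ⊓ (⊤ : SimpleGraph Bool).comap c).edgeFinset} := by
          rw [sum_congr rfl hsplit, sum_const, sum_const, card_univ, smul_eq_mul, smul_eq_mul,
            mul_comm]
      _ = 2 * ∑ c : V → Bool,
            #{e ∈ G.edgeFinset | e ∈ (G ⊓ (⊤ : SimpleGraph Bool).comap c).edgeFinset} := by
          rw [← mul_sum]
          exact congrArg _ (sum_card_bipartiteAbove_eq_sum_card_bipartiteBelow _)
      _ ≤ _ := by
          rw [mul_sum]
          gcongr with c
          exact fun e he => (mem_filter.1 he).2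
  obtain ⟨c, -, hc⟩ := exists_le_of_sum_le univ_nonempty hcount
  exact ⟨G ⊓ (⊤ : SimpleGraph Bool).comap c, inferInstance, inf_le_left,
    ⟨recolorOfEquiv _ finTwoEquiv.symm ⟨c, fun h => h.2⟩⟩, hc.trans_eq (by congr!)⟩

theorem pow_four_le_of_mul_le {C n m m' : ℕ} (hn : 0 < n) (hm : n * m ≤ (n + 1) * m')
    (hm' : m' ^ 4 ≤ C * n ^ 5) : m ^ 4 ≤ C * (n + 1) ^ 5 := by
  refine Nat.le_of_mul_le_mul_left ?_ (pow_pos hn 4)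
  calc n ^ 4 * m ^ 4 = (n * m) ^ 4 := (mul_pow _ _ _).symm
    _ ≤ ((n + 1) * m') ^ 4 := by gcongr
    _ = (n + 1) ^ 4 * m' ^ 4 := mul_pow _ _ _
    _ ≤ (n + 1) ^ 4 * (C * n ^ 5) := by gcongr
    _ = n ^ 4 * (C * ((n + 1) ^ 4 * n)) := by ring
    _ ≤ n ^ 4 * (C * ((n + 1) ^ 4 * (n + 1))) := by gcongr; exact n.le_succ
    _ = n ^ 4 * (C * (n + 1) ^ 5) := by ring

theorem card_edgeFinset_pow_four_le_of_isBipartite (hG : ¬ContainsSub theta34 G)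
    (hb : G.IsBipartite) : #G.edgeFinset ^ 4 ≤ 252 ^ 4 * Fintype.card V ^ 5 := by
  induction hn : Fintype.card V generalizing V with
  | zero =>
    have := Fintype.card_eq_zero_iff.1 hn
    simp [Subsingleton.elim G ⊥]
  | succ n ih =>
    classical
    have : Nonempty V := Fintype.card_pos_iff.1 (by omega)
    have hδ := minDegree_pow_four_le hG hb
    rw [hn] at hδ
    obtain hdense | hsparse := le_total #G.edgeFinset ((n + 1) * G.minDegree)
    · calc #G.edgeFinset ^ 4 ≤ ((n + 1) * G.minDegree) ^ 4 := by gcongr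
        _ = (n + 1) ^ 4 * G.minDegree ^ 4 := mul_pow _ _ _
        _ ≤ (n + 1) ^ 4 * (252 ^ 4 * (n + 1)) := by gcongr
        _ = 252 ^ 4 * (n + 1) ^ 5 := by ring
    · obtain ⟨v, hv⟩ := G.exists_minimal_degree_vertex
      have hdelete : #(G.induce {v}ᶜ).edgeFinset + G.minDegree = #G.edgeFinset := by
        rw [card_edgeFinset_induce_compl_singleton, card_edgeFinset_deleteIncidenceSet, hv]
        exact Nat.sub_add_cancel (G.degree_le_card_edgeFinset v)
      have hrec := ih (G := G.induce {v}ᶜ)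
        (fun h => hG (h.map (Embedding.induce _).toHom Subtype.val_injective))
        (hb.of_hom (Embedding.induce _).toHom) (by rw [Fintype.card_compl_set, hn]; simp)
      have hmul : n * #G.edgeFinset ≤ (n + 1) * #(G.induce {v}ᶜ).edgeFinset := by
        nlinarith
      obtain rfl | hpos := n.eq_zero_or_pos
      · have hempty : #(G.induce {v}ᶜ).edgeFinset = 0 := by simpa using hrec
        rw [hempty, zero_add] at hdelete
        simpa [← hdelete] using hδ
      · exact pow_four_le_of_mul_le hpos hmul hrec

theorem card_edgeFinset_pow_four_le (hG : ¬ContainsSub theta34 G) :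
    #G.edgeFinset ^ 4 ≤ 504 ^ 4 * Fintype.card V ^ 5 := by
  classical
  obtain ⟨H, _, hHG, hbip, hH⟩ := exists_le_isBipartite_card_edgeFinset_le (G := G)
  have hHfree : ¬ContainsSub theta34 H :=
    fun h => hG (h.map (Hom.ofLE hHG) Function.injective_id)
  calc #G.edgeFinset ^ 4 ≤ (2 * #H.edgeFinset) ^ 4 := by gcongr
    _ = 2 ^ 4 * #H.edgeFinset ^ 4 := mul_pow _ _ _
    _ ≤ 2 ^ 4 * (252 ^ 4 * Fintype.card V ^ 5) := by
        gcongr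
        exact card_edgeFinset_pow_four_le_of_isBipartite hHfree hbip
    _ = 504 ^ 4 * Fintype.card V ^ 5 := by ring

end EdgeBound

section RKGraph

open Finset

variable {V : Type} [Fintype V] {G : SimpleGraph V} {r k : ℕ}

theorem IsRKGraph.exists_fiber (h : IsRKGraph G r k) : ∃ π : V → Fin r,
    (∀ i, #{v | π v = i} ≤ k) ∧ ∀ i j, i ≠ j → ∃ u w, G.Adj u w ∧ π u = i ∧ π w = j := by
  obtain ⟨P, hP, hcard, hadj⟩ := h
  choose π hπ huniq using hP
  have hmem {v i} : v ∈ P i ↔ π v = i := ⟨fun h => (huniq v i h).symm, fun h => h ▸ hπ v⟩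
  refine ⟨π, fun i => ?_, fun i j hij => ?_⟩
  · convert hcard i
    ext v
    simp [hmem]
  · obtain ⟨u, hu, w, hw, huw⟩ := hadj i j hij
    exact ⟨u, w, huw, hmem.1 hu, hmem.1 hw⟩

theorem isRKGraph_of_fiber {ι : Type*} [Fintype ι] [DecidableEq ι] (hι : Fintype.card ι = r)
    (π : V → ι) (hcard : ∀ i, #{v | π v = i} ≤ k)
    (hadj : ∀ i j, i ≠ j → ∃ u w, G.Adj u w ∧ π u = i ∧ π w = j) : IsRKGraph G r k := by
  let e : Fin r ≃ ι := (Fintype.equivFinOfCardEq hι).symm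
  refine ⟨fun i => {v | π v = e i}, fun v => ⟨e.symm (π v), by simp, fun i hi => ?_⟩,
    fun i => hcard (e i), fun i j hij => ?_⟩
  · rw [(mem_filter.1 hi).2, e.symm_apply_apply]
  · obtain ⟨u, w, huw, hu, hw⟩ := hadj (e i) (e j) (e.injective.ne hij)
    exact ⟨u, by simpa, w, by simpa, huw⟩

theorem IsRKGraph.card_le (h : IsRKGraph G r k) : Fintype.card V ≤ r * k := by
  obtain ⟨π, hcard, -⟩ := h.exists_fiber
  calc Fintype.card V = ∑ i, #{v | π v = i} := card_eq_sum_card_fiberwise fun v _ => mem_univ (π v)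
    _ ≤ #(univ : Finset (Fin r)) * k := sum_le_card_nsmul _ _ _ fun i _ => hcard i
    _ = r * k := by rw [card_univ, Fintype.card_fin]

theorem IsRKGraph.choose_two_le_card_edgeFinset [DecidableRel G.Adj] (h : IsRKGraph G r k) :
    r.choose 2 ≤ #G.edgeFinset := by
  obtain ⟨π, -, hadj⟩ := h.exists_fiber
  calc r.choose 2 = #(⊤ : SimpleGraph (Fin r)).edgeFinset := by
        rw [card_edgeFinset_top_eq_card_choose_two, Fintype.card_fin]
    _ ≤ #(G.edgeFinset.image (Sym2.map π)) := card_le_card fun e he => by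
        induction e with | _ i j
        obtain ⟨u, w, huw, rfl, rfl⟩ := hadj i j (mem_edgeFinset.1 he)
        exact mem_image.2 ⟨s(u, w), mem_edgeFinset.2 huw, rfl⟩
    _ ≤ #G.edgeFinset := card_image_le

theorem IsRKGraph.pow_three_le (h : IsRKGraph G r k) (hG : ¬ContainsSub theta34 G) (hr : 2 ≤ r) :
    r ^ 3 ≤ 2016 ^ 4 * k ^ 5 := by
  classical
  have hedges : r ^ 2 ≤ 4 * #G.edgeFinset := by
    have hchoose : r * (r - 1) = r.choose 2 * 2 := by
      rw [Nat.choose_two_right, Nat.div_two_mul_two_of_even (Nat.even_mul_pred_self r)]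
    have hle := h.choose_two_le_card_edgeFinset
    obtain ⟨n, rfl⟩ := Nat.exists_eq_add_of_le hr
    rw [show 2 + n - 1 = n + 1 by omega] at hchoose
    nlinarith
  refine Nat.le_of_mul_le_mul_left ?_ (show 0 < r ^ 5 by positivity)
  calc r ^ 5 * r ^ 3 = (r ^ 2) ^ 4 := by ring
    _ ≤ (4 * #G.edgeFinset) ^ 4 := by gcongr
    _ = 4 ^ 4 * #G.edgeFinset ^ 4 := mul_pow _ _ _
    _ ≤ 4 ^ 4 * (504 ^ 4 * (r * k) ^ 5) := by
        gcongr
        exact (card_edgeFinset_pow_four_le hG).trans (by gcongr; exact h.card_le)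
    _ = r ^ 5 * (2016 ^ 4 * k ^ 5) := by ring

theorem IsRKGraph.exists_fin_comap_of_le {R : ℕ} (h : IsRKGraph G R k) (hr : r ≤ R) :
    ∃ (n : ℕ) (g : Fin n ↪ V), IsRKGraph (G.comap g) r k := by
  obtain ⟨π, hcard, hadj⟩ := h.exists_fiber
  let U := {v // (π v : ℕ) < r}
  let e : Fin (Fintype.card U) ≃ U := (Fintype.equivFin U).symm
  let g : Fin (Fintype.card U) ↪ V := e.toEmbedding.trans (Function.Embedding.subtype _)
  have hg x : (π (g x) : ℕ) < r := (e x).2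
  have hsurj {v} (hv : (π v : ℕ) < r) : ∃ x, g x = v := ⟨e.symm ⟨v, hv⟩, by simp [g, U]⟩
  refine ⟨_, g, isRKGraph_of_fiber (Fintype.card_fin r) (fun x => ⟨π (g x), hg x⟩)
    (fun i => ?_) fun i j hij => ?_⟩
  · refine (card_le_card_of_injOn g (fun x hx => ?_) g.injective.injOn).trans
      (hcard (i.castLE hr))
    simpa [Fin.ext_iff] using hx
  · obtain ⟨u, w, huw, hu, hw⟩ := hadj (i.castLE hr) (j.castLE hr) (by simpa using hij)
    obtain ⟨x, rfl⟩ := hsurj (v := u) (by simp [hu])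
    obtain ⟨y, rfl⟩ := hsurj (v := w) (by simp [hw])
    exact ⟨x, y, huw, Fin.ext (by simp [hu]), Fin.ext (by simp [hw])⟩

end RKGraph

section SumGraph

variable {M N W : Type} [AddCommGroup W]

/-- The bipartite graph on two copies `M × W` and `N × W` in which `(x, s)` and `(y, t)` are
adjacent when `s + t = g x y`. -/
def sumGraph (g : M → N → W) : SimpleGraph ((M × W) ⊕ (N × W)) :=
  SimpleGraph.fromRel fun u v => ∃ a b, u = .inl a ∧ v = .inr b ∧ a.2 + b.2 = g a.1 b.1

/-- The condition on `g` that excludes from `sumGraph g` three paths of length four between two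
left vertices with labels `x` and `z`; the `i`-th path has internal labels `y i`, `m i`, `w i`.
Only labels occur: along such a path the alternating sum of the values of `g` telescopes to the
difference `D` of the second coordinates of its ends. -/
def NoThreePaths (g : M → N → W) : Prop :=
  ∀ (x z : M) (D : W) (m : Fin 3 → M) (y w : Fin 3 → N),
    (∀ i, m i ≠ x ∧ m i ≠ z ∧ y i ≠ w i ∧
      g x (y i) - g (m i) (y i) + g (m i) (w i) - g z (w i) = D) →
    ¬Function.Injective y

variable {g : M → N → W}

theorem sumGraph_adj_inl {a : M × W} {v : (M × W) ⊕ (N × W)} :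
    (sumGraph g).Adj (.inl a) v ↔ ∃ b, v = .inr b ∧ a.2 + b.2 = g a.1 b.1 := by
  simp only [sumGraph, fromRel_adj]
  aesop

theorem sumGraph_adj_inr {b : N × W} {v : (M × W) ⊕ (N × W)} :
    (sumGraph g).Adj (.inr b) v ↔ ∃ a, v = .inl a ∧ a.2 + b.2 = g a.1 b.1 := by
  simp only [sumGraph, fromRel_adj]
  aesop

variable (g) in
/-- Interchanging the two sides of `sumGraph g`. -/
def sumGraphFlipIso : sumGraph g ≃g sumGraph (flip g) where
  toEquiv := Equiv.sumComm _ _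
  map_rel_iff' := by
    rintro (a | b) (a' | b') <;> simp [sumGraph_adj_inl, sumGraph_adj_inr, flip, add_comm]

theorem NoThreePaths.not_isTheta_inl (hg : NoThreePaths g) {a : M × W}
    {v : (M × W) ⊕ (N × W)} {x y z : Fin 3 → (M × W) ⊕ (N × W)} :
    ¬IsTheta (sumGraph g) (.inl a) v x y z := by
  intro h
  choose b hb hab using fun i => sumGraph_adj_inl.1 (h.adj_ux i)
  choose c hc hcb using fun i => sumGraph_adj_inr.1 (hb i ▸ h.adj_xy i)
  choose d hd hcd using fun i => sumGraph_adj_inl.1 (hc i ▸ h.adj_yz i)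
  obtain ⟨e, rfl, -⟩ := sumGraph_adj_inr.1 (hd 0 ▸ h.adj_zw 0)
  have hed i : e.2 + (d i).2 = g e.1 (d i).1 := by
    simpa [sumGraph_adj_inr, hd] using h.adj_zw i
  refine hg a.1 e.1 (a.2 - e.2) (fun i => (c i).1) (fun i => (b i).1) (fun i => (d i).1)
    (fun i => ⟨fun hca => ?_, fun hce => ?_, fun hbd => ?_, ?_⟩) fun i j hij => ?_
  · refine h.ne_uy i (hc i ▸ congrArg _ (Prod.ext hca.symm ?_))
    rw [eq_sub_of_add_eq (hab i), eq_sub_of_add_eq (hcb i), hca]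
  · refine h.ne_wy i (hc i ▸ congrArg _ (Prod.ext hce.symm ?_))
    rw [eq_sub_of_add_eq (hed i), eq_sub_of_add_eq (hcd i), hce]
  · refine h.ne_xz i i (hb i ▸ hd i ▸ congrArg _ (Prod.ext hbd ?_))
    rw [eq_sub_of_add_eq' (hcb i), eq_sub_of_add_eq' (hcd i), hbd]
  · rw [← hab i, ← hcb i, ← hcd i, ← hed i]
    abel
  · refine h.inj_x (hb i ▸ hb j ▸ congrArg _ (Prod.ext hij ?_))
    rw [eq_sub_of_add_eq' (hab i), eq_sub_of_add_eq' (hab j)]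
    exact congrArg (g a.1 · - a.2) hij

theorem not_containsSub_theta34_sumGraph (hg : NoThreePaths g) (hg' : NoThreePaths (flip g)) :
    ¬ContainsSub theta34 (sumGraph g) := by
  rw [containsSub_theta34_iff]
  rintro ⟨a | b, w, x, y, z, h⟩
  · exact hg.not_isTheta_inl h
  · exact hg'.not_isTheta_inl (h.map (sumGraphFlipIso g).toHom (sumGraphFlipIso g).injective)

open Finset in
theorem isRKGraph_sumGraph {A : Type} [AddCommGroup A] [Fintype M] [Fintype W] [Fintype A]
    (g : M → M → W) (φ : W ≃+ A × A) :
    IsRKGraph (sumGraph g) (Fintype.card M * Fintype.card A) (2 * Fintype.card A) := by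
  classical
  let π : (M × W) ⊕ (M × W) → M × A :=
    Sum.elim (fun a => (a.1, (φ a.2).1)) fun b => (b.1, (φ b.2).2)
  have hπ : ∀ v i, π v = i →
      v ∈ (univ : Finset A).image (fun t => .inl (i.1, φ.symm (i.2, t))) ∪
        univ.image (fun s => .inr (i.1, φ.symm (s, i.2))) := by
    rintro (⟨x, s⟩ | ⟨y, t⟩) _ rfl
    · exact mem_union_left _ (mem_image.2 ⟨(φ s).2, mem_univ _, by simp [π]⟩)
    · exact mem_union_right _ (mem_image.2 ⟨(φ t).1, mem_univ _, by simp [π]⟩)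
  refine isRKGraph_of_fiber (Fintype.card_prod M A) π (fun i => ?_) fun i j _ => ?_
  · calc #{v | π v = i} ≤ _ := card_le_card fun v hv => hπ v i (mem_filter.1 hv).2
      _ ≤ Fintype.card A + Fintype.card A :=
        (card_union_le _ _).trans (add_le_add card_image_le card_image_le)
      _ = 2 * Fintype.card A := (two_mul _).symm
  · obtain ⟨x, α⟩ := i
    obtain ⟨y, β⟩ := j
    refine ⟨.inl (x, φ.symm (α, (φ (g x y)).2 - β)), .inr (y, φ.symm ((φ (g x y)).1 - α, β)),
      sumGraph_adj_inl.2 ⟨_, rfl, φ.injective ?_⟩, by simp [π], by simp [π]⟩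
    simp

end SumGraph

section MonomialMap

variable {R : Type} [CommRing R]

/-- The map `(x, y) ↦ (xy, x²y, xy²)`, whose `sumGraph` contains no `θ_{3,4}` when `R` is a domain
in which `2 ≠ 0`. -/
def monomialMap (R : Type) [CommRing R] (x y : R) : R × R × R :=
  (x * y, x ^ 2 * y, x * y ^ 2)

/-- The equations satisfied by the internal labels `y`, `m`, `w` of a path of length four in
`sumGraph (monomialMap R)` whose ends have labels `x` and `z`. -/
structure IsSolution (x z D₁ D₂ D₃ m y w : R) : Prop where
  ne_x : m ≠ x
  ne_z : m ≠ z
  ne_yw : y ≠ w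
  eq_one : x * y - m * y + m * w - z * w = D₁
  eq_two : x ^ 2 * y - m ^ 2 * y + m ^ 2 * w - z ^ 2 * w = D₂
  eq_three : x * y ^ 2 - m * y ^ 2 + m * w ^ 2 - z * w ^ 2 = D₃

variable {x z D₁ D₂ D₃ m y w m' y' w' : R}

namespace IsSolution

theorem prod_eq (h : IsSolution x z D₁ D₂ D₃ m y w) :
    (x - m) * (m - z) * (y - w) = D₂ - D₁ * (x + z) := by
  rw [← h.eq_one, ← h.eq_two]
  ring

theorem prod_sq_eq (h : IsSolution x z D₁ D₂ D₃ m y w) :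
    (x - m) * (m - z) * (y - w) ^ 2 = (x - z) * D₃ - D₁ ^ 2 := by
  rw [← h.eq_one, ← h.eq_three]
  ring

variable [IsDomain R]

theorem prod_ne_zero (h : IsSolution x z D₁ D₂ D₃ m y w) :
    (x - m) * (m - z) * (y - w) ≠ 0 :=
  mul_ne_zero (mul_ne_zero (sub_ne_zero.2 h.ne_x.symm) (sub_ne_zero.2 h.ne_z))
    (sub_ne_zero.2 h.ne_yw)

theorem sub_eq_sub (h : IsSolution x z D₁ D₂ D₃ m y w) (h' : IsSolution x z D₁ D₂ D₃ m' y' w') :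
    y - w = y' - w' := by
  have hprod := h.prod_eq.trans h'.prod_eq.symm
  have hprod_sq := h.prod_sq_eq.trans h'.prod_sq_eq.symm
  rw [sq, sq, ← mul_assoc, ← mul_assoc, hprod] at hprod_sq
  exact mul_left_cancel₀ h'.prod_ne_zero hprod_sq

theorem eq_or_add_eq (h : IsSolution x z D₁ D₂ D₃ m y w)
    (h' : IsSolution x z D₁ D₂ D₃ m' y' w') : m = m' ∨ m + m' = x + z := by
  have hprod := h.prod_eq.trans h'.prod_eq.symm
  rw [← h.sub_eq_sub h'] at hprod
  have hquad := mul_right_cancel₀ (sub_ne_zero.2 h.ne_yw) hprod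
  have : (m - m') * (m + m' - (x + z)) = 0 := by linear_combination -hquad
  exact (mul_eq_zero.1 this).imp sub_eq_zero.1 sub_eq_zero.1

theorem eq_of_eq (h2 : (2 : R) ≠ 0) (h : IsSolution x z D₁ D₂ D₃ m y w)
    (h' : IsSolution x z D₁ D₂ D₃ m y' w') : y = y' := by
  have hsub := h.sub_eq_sub h'
  have hshift : (x - z) * (y - y') = 0 := by
    linear_combination h.eq_one - h'.eq_one + (m - z) * hsub
  obtain hxz | hy := mul_eq_zero.1 hshift
  · obtain rfl := sub_eq_zero.1 hxz
    have hsum : (x - m) * (y - w) * (2 * (y - y')) = 0 := by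
      linear_combination h.eq_three - h'.eq_three +
        (x - m) * (y - w - (y' + w')) * hsub
    refine sub_eq_zero.1 ((mul_eq_zero.1 ((mul_eq_zero.1 hsum).resolve_left ?_)).resolve_left h2)
    exact mul_ne_zero (sub_ne_zero.2 h.ne_x.symm) (sub_ne_zero.2 h.ne_yw)
  · exact sub_eq_zero.1 hy

-- Two of the three `m i` coincide, since each of `m 1`, `m 2` is `m 0` or `x + z - m 0`.
theorem not_injective (h2 : (2 : R) ≠ 0) {m y w : Fin 3 → R}
    (h : ∀ i, IsSolution x z D₁ D₂ D₃ (m i) (y i) (w i)) : ¬Function.Injective y := by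
  intro hy
  have hm {i j} (hij : i ≠ j) : m i ≠ m j := fun hmm =>
    hy.ne hij (eq_of_eq h2 (h i) (hmm ▸ h j))
  have h01 := ((h 0).eq_or_add_eq (h 1)).resolve_left (hm (by decide))
  have h02 := ((h 0).eq_or_add_eq (h 2)).resolve_left (hm (by decide))
  exact hm (by decide) (add_left_cancel (h01.trans h02.symm))

end IsSolution

variable [IsDomain R]

theorem noThreePaths_monomialMap (h2 : (2 : R) ≠ 0) : NoThreePaths (monomialMap R) := by
  intro x z D m y w h
  refine IsSolution.not_injective h2 (x := x) (z := z) (D₁ := D.1) (D₂ := D.2.1) (D₃ := D.2.2)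
    (m := m) (w := w) fun i => ?_
  obtain ⟨hx, hz, hyw, rfl⟩ := h i
  exact ⟨hx, hz, hyw, rfl, rfl, rfl⟩

theorem noThreePaths_flip_monomialMap (h2 : (2 : R) ≠ 0) :
    NoThreePaths (flip (monomialMap R)) := by
  intro x z D m y w h
  refine IsSolution.not_injective h2 (x := x) (z := z) (D₁ := D.1) (D₂ := D.2.2) (D₃ := D.2.1)
    (m := m) (w := w) fun i => ?_
  obtain ⟨hx, hz, hyw, rfl⟩ := h i
  exact ⟨hx, hz, hyw, by simp [flip, monomialMap, mul_comm], by simp [flip, monomialMap, mul_comm],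
    by simp [flip, monomialMap, mul_comm]⟩

end MonomialMap

theorem exists_isRKGraph_of_prime {p r : ℕ} (hp : p.Prime) (hp2 : p ≠ 2) (hr : r ≤ p ^ 5) :
    ∃ (n : ℕ) (G : SimpleGraph (Fin n)), ¬ContainsSub theta34 G ∧ IsRKGraph G r (2 * p ^ 3) := by
  have : Fact p.Prime := ⟨hp⟩
  let F := GaloisField p 2
  have : Fintype F := Fintype.ofFinite F
  have hcardF : Fintype.card F = p ^ 2 := by
    rw [Fintype.card_eq_nat_card, GaloisField.card p 2 two_ne_zero]
  have h2 : (2 : F) ≠ 0 := fun h => hp2 <|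
    (Nat.prime_dvd_prime_iff_eq hp Nat.prime_two).1 <|
      (CharP.cast_eq_zero_iff F p 2).1 (by exact_mod_cast h)
  let φ : (F × F × F) ≃ₗ[ZMod p] (Fin 3 → ZMod p) × (Fin 3 → ZMod p) :=
    LinearEquiv.ofFinrankEq _ _ (by simp [F, GaloisField.finrank p two_ne_zero])
  have hRK := isRKGraph_sumGraph (monomialMap F) φ.toAddEquiv
  have hcard : Fintype.card F * Fintype.card (Fin 3 → ZMod p) = p ^ 5 := by
    simp [hcardF, ZMod.card, ← pow_add]
  obtain ⟨n, f, hf⟩ := hRK.exists_fin_comap_of_le (hr.trans_eq hcard.symm)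
  refine ⟨n, _, fun h => ?_, by simpa [ZMod.card] using hf⟩
  exact not_containsSub_theta34_sumGraph (noThreePaths_monomialMap h2)
    (noThreePaths_flip_monomialMap h2) (h.map (Embedding.comap f _).toHom f.injective)

section FGraph

variable {r : ℕ}

theorem exists_isRKGraph_fGraph (r : ℕ) : ∃ (n : ℕ) (G : SimpleGraph (Fin n)),
    ¬ContainsSub theta34 G ∧ IsRKGraph G r (fGraph theta34 r) := by
  obtain ⟨p, hrp, hp⟩ := Nat.exists_infinite_primes (r + 3)
  have hr : r ≤ p ^ 5 := (show r ≤ p by omega).trans (Nat.le_self_pow (by norm_num) p)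
  exact Nat.sInf_mem (s := {k | ∃ (n : ℕ) (G : SimpleGraph (Fin n)),
    ¬ContainsSub theta34 G ∧ IsRKGraph G r k}) ⟨_, exists_isRKGraph_of_prime hp (by omega) hr⟩

theorem rpow_le_fGraph_theta34 (hr : 2 ≤ r) :
    1 / 2016 * (r : ℝ) ^ ((3 : ℝ) / 5) ≤ fGraph theta34 r := by
  obtain ⟨n, G, hG, h⟩ := exists_isRKGraph_fGraph r
  have hpow : (r : ℝ) ^ 3 ≤ 2016 ^ 4 * (fGraph theta34 r : ℝ) ^ 5 :=
    mod_cast h.pow_three_le hG hr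
  have hfive : ((r : ℝ) ^ ((3 : ℝ) / 5)) ^ 5 ≤ (2016 * (fGraph theta34 r : ℝ)) ^ 5 :=
    calc ((r : ℝ) ^ ((3 : ℝ) / 5)) ^ 5 = (r : ℝ) ^ 3 := by
          rw [← Real.rpow_mul_natCast (by positivity), ← Real.rpow_natCast]
          norm_num
      _ ≤ 2016 ^ 4 * (fGraph theta34 r : ℝ) ^ 5 := hpow
      _ ≤ 2016 ^ 5 * (fGraph theta34 r : ℝ) ^ 5 := by gcongr <;> norm_num
      _ = (2016 * (fGraph theta34 r : ℝ)) ^ 5 := (mul_pow _ _ _).symm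
  linarith [le_of_pow_le_pow_left₀ (by norm_num) (by positivity) hfive]

theorem exists_prime_ne_two_mem_Icc {t : ℝ} (ht : 1 ≤ t) :
    ∃ p : ℕ, p.Prime ∧ p ≠ 2 ∧ t ≤ p ∧ p ≤ 6 * t := by
  have hceil : 0 < ⌈t⌉₊ := Nat.ceil_pos.2 (by linarith)
  obtain ⟨p, hp, hlt, hle⟩ := Nat.exists_prime_lt_and_le_two_mul (⌈t⌉₊ + 1) (by omega)
  refine ⟨p, hp, by omega, (Nat.le_ceil t).trans (by gcongr; omega), ?_⟩
  calc (p : ℝ) ≤ 2 * (⌈t⌉₊ + 1) := mod_cast hle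
    _ ≤ 6 * t := by linarith [Nat.ceil_lt_add_one (zero_le_one.trans ht)]

theorem fGraph_theta34_le_rpow (hr : 1 ≤ r) :
    fGraph theta34 r ≤ 432 * (r : ℝ) ^ ((3 : ℝ) / 5) := by
  have hroot (n : ℕ) : ((r : ℝ) ^ ((1 : ℝ) / 5)) ^ n = (r : ℝ) ^ ((n : ℝ) / 5) := by
    rw [← Real.rpow_mul_natCast (by positivity), one_div_mul_eq_div]
  obtain ⟨p, hp, hp2, hlower, hupper⟩ := exists_prime_ne_two_mem_Icc
    (Real.one_le_rpow (show (1 : ℝ) ≤ r from mod_cast hr) (show (0 : ℝ) ≤ 1 / 5 by norm_num))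
  have hrp : r ≤ p ^ 5 := by
    have : ((r : ℝ) ^ ((1 : ℝ) / 5)) ^ 5 ≤ (p : ℝ) ^ 5 := by gcongr
    rw [hroot] at this
    exact_mod_cast (by simpa using this : (r : ℝ) ≤ (p : ℝ) ^ 5)
  have hle : fGraph theta34 r ≤ 2 * p ^ 3 := Nat.sInf_le (exists_isRKGraph_of_prime hp hp2 hrp)
  calc (fGraph theta34 r : ℝ) ≤ 2 * (p : ℝ) ^ 3 := mod_cast hle
    _ ≤ 2 * (6 * (r : ℝ) ^ ((1 : ℝ) / 5)) ^ 3 := by gcongr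
    _ = 432 * (r : ℝ) ^ ((3 : ℝ) / 5) := by
      rw [mul_pow, hroot]
      norm_num
      ring

end FGraph

/-- There exist `c, C > 0` such that for all sufficiently large `r`,
`c·r^{3/5} ≤ f(r, θ_{3,4}) ≤ C·r^{3/5}`. -/
theorem stmt5 :
    ∃ (c C : ℝ) (r₀ : ℕ), 0 < c ∧ 0 < C ∧ ∀ r : ℕ, r₀ ≤ r →
      c * (r : ℝ) ^ ((3 : ℝ) / 5) ≤ (fGraph theta34 r : ℝ) ∧
      (fGraph theta34 r : ℝ) ≤ C * (r : ℝ) ^ ((3 : ℝ) / 5) :=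
  ⟨1 / 2016, 432, 2, by norm_num, by norm_num, fun _ hr =>
    ⟨rpow_le_fGraph_theta34 hr, fGraph_theta34_le_rpow (one_le_two.trans hr)⟩⟩
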